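/- arXiv:1707.03038 — 2 statements merged into one kernel-verified Lean document; each statement's English description precedes it below -/
import Mathlib

section
/- Let D ⊂ ℝ² be the unit disc and let u ∈ W^{1,1}(D) satisfy ∫_D ∇u · ∇ψ = 0 for all ψ ∈ C¹ functions that vanish on a neighborhood of the closed disc's complement intersected with D (i.e. u is a distributional solution of the Dirichlet problem with f = 0 and zero boundary values). Then the antisymmetric reflection û(x) = u(x) for x ∈ D and û(x) = −u(x/|x|²) for x ∉ D is harmonic on all of ℝ², and consequently u ≡ 0. -/
open MeasureTheory Metric Complex Classical

/-- The Laplacian of `ψ : ℂ → ℝ`, with `ℂ ≅ ℝ²` (basis `1, i`). -/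
noncomputable def lap (ψ : ℂ → ℝ) (x : ℂ) : ℝ :=
  fderiv ℝ (fun y => fderiv ℝ ψ y 1) x 1
    + fderiv ℝ (fun y => fderiv ℝ ψ y Complex.I) x Complex.I

/-- The antisymmetric reflection `û` of `u` across the unit circle,
`û(x) = u(x)` on `D`, `û(x) = -u(x*)` with `x* = x/|x|² = (conj x)⁻¹` outside. -/

noncomputable def antiReflect (u : ℂ → ℝ) (x : ℂ) : ℝ :=
  if x ∈ ball (0 : ℂ) 1 then u x else -u ((starRingEnd ℂ) x)⁻¹

/-- The real-valued monomial `Re (c z^a z̄^b)`. -/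
noncomputable def reMonomial (c : ℂ) (a b : ℕ) (z : ℂ) : ℝ :=
  (c * z ^ a * (starRingEnd ℂ z) ^ b).re

lemma contDiff_reMonomial {n : WithTop ℕ∞} (c : ℂ) (a b : ℕ) :
    ContDiff ℝ n (reMonomial c a b) := by
  have h : ContDiff ℝ n (fun z : ℂ => c * z ^ a * (conjCLE z) ^ b) :=
    (contDiff_const.mul (contDiff_id.pow a)).mul (conjCLE.contDiff.pow b)
  exact reCLM.contDiff.comp h

lemma fderiv_reMonomial (c : ℂ) (a b : ℕ) (z v : ℂ) :
    fderiv ℝ (reMonomial c a b) z v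
      = reMonomial (c * v * a) (a - 1) b z
        + reMonomial (c * starRingEnd ℂ v * b) a (b - 1) z := by
  have h1 : HasFDerivAt (fun z : ℂ => z) (ContinuousLinearMap.id ℝ ℂ) z := hasFDerivAt_id z
  have h2 : HasFDerivAt (fun z : ℂ => conjCLE z) (conjCLE : ℂ →L[ℝ] ℂ) z :=
    conjCLE.hasFDerivAt
  have h3 := ((h1.pow a).const_mul c).mul (h2.pow b)
  have h4 := (reCLM.hasFDerivAt.comp z h3).fderiv
  have h5 : (reMonomial c a b) = (reCLM ∘ fun z : ℂ => c * z ^ a * (conjCLE z) ^ b) := rfl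
  rw [h5]
  erw [h4]
  simp [reMonomial]
  ring

lemma lap_reMonomial (c : ℂ) (a b : ℕ) (z : ℂ) :
    lap (reMonomial c a b) z = reMonomial (4 * a * b * c) (a - 1) (b - 1) z := by
  have hd : ∀ c a b, DifferentiableAt ℝ (reMonomial c a b) z := fun c a b =>
    ((contDiff_reMonomial (n := 1) c a b).differentiable one_ne_zero) z
  have key : ∀ v, fderiv ℝ (fun y => fderiv ℝ (reMonomial c a b) y v) z v = 
      fderiv ℝ (reMonomial (c * v * a) (a - 1) b) z v
        + fderiv ℝ (reMonomial (c * starRingEnd ℂ v * b) a (b - 1)) z v := by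
    intro v
    have : (fun y => fderiv ℝ (reMonomial c a b) y v) =
      reMonomial (c * v * a) (a - 1) b + reMonomial (c * starRingEnd ℂ v * b) a (b - 1) := by
      ext y; exact fderiv_reMonomial c a b y v
    rw [this, fderiv_add (hd _ _ _) (hd _ _ _)]
    rfl
  rw [lap, key, key]
  simp only [fderiv_reMonomial]
  simp only [reMonomial, ← add_re]
  congr 1
  simp only [map_one, conj_I]
  ring_nf
  simp only [I_sq]
  ring

lemma one_sub_norm_sq_mul_reMonomial (c : ℂ) (a b : ℕ) (z : ℂ) :
    (1 - ‖z‖ ^ 2) * reMonomial c a b z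
      = reMonomial c a b z - reMonomial c (a + 1) (b + 1) z := by
  have h : c * z ^ (a + 1) * (starRingEnd ℂ z) ^ (b + 1)
      = ((‖z‖ ^ 2 : ℝ) : ℂ) * (c * z ^ a * (starRingEnd ℂ z) ^ b) := by
    push_cast
    rw [← mul_conj' z]; ring
  simp only [reMonomial]
  rw [h, re_ofReal_mul]; ring

lemma lap_one_sub_norm_sq_mul_reMonomial (c : ℂ) (a b : ℕ) (z : ℂ) :
    lap (fun z => (1 - ‖z‖ ^ 2) * reMonomial c a b z) z
      = reMonomial (4 * a * b * c) (a - 1) (b - 1) z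
        - reMonomial (4 * (a + 1) * (b + 1) * c) a b z := by
  have hd : ∀ c a b, Differentiable ℝ (reMonomial c a b) := fun c a b =>
    ((contDiff_reMonomial (n := 1) c a b).differentiable one_ne_zero)
  have hd2 : ∀ c a b v, Differentiable ℝ (fun y => fderiv ℝ (reMonomial c a b) y v) :=
    fun c a b v => by
      simp only [fderiv_reMonomial]
      exact (hd _ _ _).add (hd _ _ _)
  have h0 : (fun z => (1 - ‖z‖ ^ 2) * reMonomial c a b z)
      = reMonomial c a b - reMonomial c (a + 1) (b + 1) := by
    ext z; exact one_sub_norm_sq_mul_reMonomial c a b z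
  have h1 : ∀ v, fderiv ℝ (fun y => fderiv ℝ (fun z => (1 - ‖z‖ ^ 2) * reMonomial c a b z) y v) z v
      = fderiv ℝ (fun y => fderiv ℝ (reMonomial c a b) y v) z v
        - fderiv ℝ (fun y => fderiv ℝ (reMonomial c (a + 1) (b + 1)) y v) z v := by
    intro v
    have : (fun y => fderiv ℝ (fun z => (1 - ‖z‖ ^ 2) * reMonomial c a b z) y v)
        = (fun y => fderiv ℝ (reMonomial c a b) y v)
          - (fun y => fderiv ℝ (reMonomial c (a + 1) (b + 1)) y v) := by
      ext y
      rw [h0, fderiv_sub (hd _ _ _ y) (hd _ _ _ y)]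
      rfl
    rw [this, fderiv_sub (hd2 _ _ _ _ z) (hd2 _ _ _ _ z)]
    rfl
  have h2 := lap_reMonomial c a b z
  have h3 := lap_reMonomial c (a + 1) (b + 1) z
  push_cast [Nat.add_sub_cancel] at h3
  rw [← h2, ← h3, lap, h1, h1]
  simp only [lap]
  ring

lemma MeasureTheory.IntegrableOn.mul_continuous_ball {f g : ℂ → ℝ} (hf : IntegrableOn f (ball 0 1))
    (hg : Continuous g) : IntegrableOn (fun x => f x * g x) (ball 0 1) := by
  obtain ⟨C, hC⟩ := (isCompact_closedBall (0 : ℂ) 1).exists_bound_of_continuousOn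
    hg.continuousOn
  refine Integrable.mul_bdd (c := C) hf hg.aestronglyMeasurable ?_
  filter_upwards [ae_restrict_mem measurableSet_ball] with x hx
  exact hC x (ball_subset_closedBall hx)

lemma exists_hasCompactSupport_eqOn_ball {φ : ℂ → ℝ} (hφ : ContDiff ℝ 1 φ) :
    ∃ φ' : ℂ → ℝ, ContDiff ℝ 1 φ' ∧ HasCompactSupport φ' ∧
      (∀ x ∈ ball (0 : ℂ) 1, φ' x = φ x) ∧
      ∀ x ∈ ball (0 : ℂ) 1, fderiv ℝ φ' x = fderiv ℝ φ x := by
  let χ : ContDiffBump (0 : ℂ) := ⟨1, 2, one_pos, one_lt_two⟩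
  have h1 : ∀ x ∈ ball (0 : ℂ) 1, χ x * φ x = φ x := fun x hx => by
    rw [χ.one_of_mem_closedBall (ball_subset_closedBall hx), one_mul]
  refine ⟨fun x => χ x * φ x, χ.contDiff.mul hφ, χ.hasCompactSupport.mul_right, h1, ?_⟩
  intro x hx
  apply Filter.EventuallyEq.fderiv_eq
  filter_upwards [isOpen_ball.mem_nhds hx] with y hy
  exact h1 y hy

/-- If the zero extension of `f` from the disc has the zero extension of `g` as weak derivative
in direction `v`, then integration by parts on the disc holds against any `C¹` function. -/
lemma integral_ball_mul_fderiv {f g : ℂ → ℝ} {v : ℂ}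
    (h : ∀ φ : ℂ → ℝ, ContDiff ℝ 1 φ → HasCompactSupport φ →
      (∫ x, Set.indicator (ball (0:ℂ) 1) f x * fderiv ℝ φ x v)
        = - ∫ x, Set.indicator (ball (0:ℂ) 1) g x * φ x)
    {φ : ℂ → ℝ} (hφ : ContDiff ℝ 1 φ) :
    ∫ x in ball (0 : ℂ) 1, f x * fderiv ℝ φ x v = - ∫ x in ball (0 : ℂ) 1, g x * φ x := by
  obtain ⟨φ', h1, h2, h3, h4⟩ := exists_hasCompactSupport_eqOn_ball hφ
  have := h φ' h1 h2
  have hind : ∀ k l : ℂ → ℝ, ∫ x, Set.indicator (ball (0:ℂ) 1) k x * l x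
      = ∫ x in ball (0:ℂ) 1, k x * l x := fun k l => by
    simp only [← Set.indicator_mul_left]
    exact integral_indicator measurableSet_ball
  rw [hind, hind] at this
  rw [setIntegral_congr_fun measurableSet_ball (g := fun x => f x * fderiv ℝ φ' x v),
    setIntegral_congr_fun (f := fun x => g x * φ x) measurableSet_ball (g := fun x => g x * φ' x)]
  · exact this
  · intro x hx; simp only [h3 x hx]
  · intro x hx; simp only [h4 x hx]

/-- A continuous ramp, equal to `0` for `n t ≤ 1` and to `1` for `n t ≥ 2`. -/
noncomputable def ramp (n : ℕ) (t : ℝ) : ℝ := min 1 (max 0 (n * t - 1))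

lemma continuous_ramp (n : ℕ) : Continuous (ramp n) := by unfold ramp; fun_prop

lemma ramp_nonneg (n : ℕ) (t : ℝ) : 0 ≤ ramp n t := by simp [ramp]

lemma ramp_le_one (n : ℕ) (t : ℝ) : ramp n t ≤ 1 := by simp [ramp]

lemma norm_ramp_le_one (n : ℕ) (t : ℝ) : ‖ramp n t‖ ≤ 1 := by
  rw [Real.norm_of_nonneg (ramp_nonneg n t)]; exact ramp_le_one n t

lemma tendsto_ramp {t : ℝ} (ht : 0 < t) :
    Filter.Tendsto (fun n => ramp n t) Filter.atTop (nhds 1) := by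
  apply tendsto_const_nhds.congr'
  obtain ⟨N, hN⟩ := exists_nat_gt (2 / t)
  filter_upwards [Filter.eventually_ge_atTop N] with n hn
  have h1 : (2 : ℝ) / t < n := hN.trans_le (by exact_mod_cast hn)
  rw [div_lt_iff₀ ht] at h1
  rw [ramp, eq_comm, min_eq_left]
  exact le_max_of_le_right (by linarith)

/-- A `C¹` truncation of the identity near `0`. -/
noncomputable def truncation (n : ℕ) (t : ℝ) : ℝ := ∫ s in (0 : ℝ)..t, ramp n s

lemma hasDerivAt_truncation (n : ℕ) (t : ℝ) : HasDerivAt (truncation n) (ramp n t) t :=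
  (continuous_ramp n).integral_hasStrictDerivAt 0 t |>.hasDerivAt

lemma contDiff_truncation (n : ℕ) : ContDiff ℝ 1 (truncation n) := by
  rw [contDiff_one_iff_deriv]
  refine ⟨fun t => (hasDerivAt_truncation n t).differentiableAt, ?_⟩
  rw [funext fun t => (hasDerivAt_truncation n t).deriv]
  exact continuous_ramp n

lemma norm_truncation_le (n : ℕ) (t : ℝ) : ‖truncation n t‖ ≤ |t| := by
  simpa [truncation] using intervalIntegral.norm_integral_le_of_norm_le_const (a := 0) (b := t)
    (fun s _ => norm_ramp_le_one n s)

lemma tendsto_truncation {t : ℝ} (ht : 0 < t) :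
    Filter.Tendsto (fun n => truncation n t) Filter.atTop (nhds t) := by
  have : Filter.Tendsto (fun n => truncation n t) Filter.atTop (nhds (∫ s in (0 : ℝ)..t, 1)) := by
    apply intervalIntegral.tendsto_integral_filter_of_dominated_convergence (fun _ => 1)
    · exact Filter.Eventually.of_forall fun n => (continuous_ramp n).aestronglyMeasurable
    · exact Filter.Eventually.of_forall fun n => Filter.Eventually.of_forall fun s _ =>
        norm_ramp_le_one n s
    · exact intervalIntegrable_const
    · refine Filter.Eventually.of_forall fun s hs => tendsto_ramp ?_
      rw [Set.uIoc_of_le ht.le] at hs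
      exact hs.1
  simpa using this

lemma truncation_eq_zero {n : ℕ} {t : ℝ} (ht : n * t ≤ 1) : truncation n t = 0 := by
  apply intervalIntegral.integral_zero_ae
  refine Filter.Eventually.of_forall fun s hs => ?_
  have h : (n : ℝ) * s ≤ 1 := by
    rcases le_total 0 t with h0 | h0
    · rw [Set.uIoc_of_le h0] at hs
      exact (mul_le_mul_of_nonneg_left hs.2 n.cast_nonneg).trans ht
    · rw [Set.uIoc_of_ge h0] at hs
      exact (mul_nonpos_of_nonneg_of_nonpos n.cast_nonneg hs.2).trans zero_le_one
  rw [ramp, max_eq_left (by linarith)]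
  simp

lemma tsupport_truncation_mul_subset (n : ℕ) (q : ℂ → ℝ) :
    tsupport (fun z : ℂ => truncation n (1 - ‖z‖ ^ 2) * q z) ⊆ ball 0 1 := by
  have hsub : Function.support (fun z : ℂ => truncation n (1 - ‖z‖ ^ 2) * q z)
      ⊆ {z : ℂ | 1 ≤ n * (1 - ‖z‖ ^ 2)} := by
    intro z hz
    by_contra hcon
    simp only [Set.mem_ofPred_eq, not_le] at hcon
    exact hz (by simp only [truncation_eq_zero hcon.le, zero_mul])
  have hcl : IsClosed {z : ℂ | 1 ≤ (n : ℝ) * (1 - ‖z‖ ^ 2)} :=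
    isClosed_le continuous_const (by fun_prop)
  refine (closure_minimal hsub hcl).trans fun z hz => ?_
  simp only [Set.mem_ofPred_eq] at hz
  rw [mem_ball_zero_iff]
  by_contra hcon
  have : (n : ℝ) * (1 - ‖z‖ ^ 2) ≤ 0 :=
    mul_nonpos_of_nonneg_of_nonpos n.cast_nonneg (by nlinarith)
  linarith

/-- A weakly divergence-free integrable field on the disc is orthogonal to the gradient of any
`C¹` function which is divisible by the defining function `1 - |z|²`. -/
lemma integral_ball_grad_one_sub_norm_sq_mul {f g : ℂ → ℝ}
    (hf : IntegrableOn f (ball 0 1)) (hg : IntegrableOn g (ball 0 1))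
    (h : ∀ ψ : ℂ → ℝ, ContDiff ℝ 1 ψ → HasCompactSupport ψ → tsupport ψ ⊆ ball 0 1 →
      (∫ x in ball (0:ℂ) 1, (f x * fderiv ℝ ψ x 1 + g x * fderiv ℝ ψ x Complex.I)) = 0)
    {q : ℂ → ℝ} (hq : ContDiff ℝ 1 q) :
    ∫ x in ball (0:ℂ) 1, (f x * fderiv ℝ (fun z => (1 - ‖z‖ ^ 2) * q z) x 1
      + g x * fderiv ℝ (fun z => (1 - ‖z‖ ^ 2) * q z) x Complex.I) = 0 := by
  let ρ : ℂ → ℝ := fun z => 1 - ‖z‖ ^ 2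
  have hρ : ContDiff ℝ 1 ρ := contDiff_const.sub (contDiff_norm_sq ℝ)
  have hρd := hρ.differentiable one_ne_zero
  have hqd := hq.differentiable one_ne_zero
  have hψ : ∀ n, ContDiff ℝ 1 (fun z => truncation n (ρ z) * q z) := fun n =>
    ((contDiff_truncation n).comp hρ).mul hq
  have hzero : ∀ n, ∫ x in ball (0:ℂ) 1,
      (f x * fderiv ℝ (fun z => truncation n (ρ z) * q z) x 1
        + g x * fderiv ℝ (fun z => truncation n (ρ z) * q z) x Complex.I) = 0 := fun n => by
    have hs := tsupport_truncation_mul_subset n q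
    refine h _ (hψ n) ?_ hs
    exact (isCompact_closedBall (0 : ℂ) 1).of_isClosed_subset (isClosed_tsupport _)
      (hs.trans ball_subset_closedBall)
  have hder : ∀ n x v, fderiv ℝ (fun z => truncation n (ρ z) * q z) x v
      = truncation n (ρ x) * fderiv ℝ q x v + q x * (ramp n (ρ x) * fderiv ℝ ρ x v) := by
    intro n x v
    have h1 := ((hasDerivAt_truncation n (ρ x)).comp_hasFDerivAt x (hρd x).hasFDerivAt).mul
      (hqd x).hasFDerivAt
    have h2 := h1.fderiv
    simp only [Function.comp_def] at h2
    erw [h2]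
    simp
  have hder' : ∀ x v, fderiv ℝ (fun z => ρ z * q z) x v
      = ρ x * fderiv ℝ q x v + q x * (1 * fderiv ℝ ρ x v) := by
    intro x v
    have h2 := ((hρd x).hasFDerivAt.mul (hqd x).hasFDerivAt).fderiv
    erw [h2]
    simp
  have hcont : ∀ {φ : ℂ → ℝ}, ContDiff ℝ 1 φ → ∀ v, Continuous fun x => fderiv ℝ φ x v :=
    fun hφ v => (hφ.continuous_fderiv one_ne_zero).clm_apply continuous_const
  have hlim : Filter.Tendsto (fun n => ∫ x in ball (0:ℂ) 1,
      (f x * fderiv ℝ (fun z => truncation n (ρ z) * q z) x 1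
        + g x * fderiv ℝ (fun z => truncation n (ρ z) * q z) x Complex.I)) Filter.atTop
      (nhds (∫ x in ball (0:ℂ) 1, (f x * fderiv ℝ (fun z => ρ z * q z) x 1
        + g x * fderiv ℝ (fun z => ρ z * q z) x Complex.I))) := by
    let K : ℂ → ℂ → ℝ := fun v x => |fderiv ℝ q x v| + |q x| * |fderiv ℝ ρ x v|
    have hK : ∀ v, Continuous (K v) := fun v =>
      (hcont hq v).abs.add (hq.continuous.abs.mul (hcont hρ v).abs)
    have hbound : ∀ n v, ∀ x ∈ ball (0 : ℂ) 1,
        |fderiv ℝ (fun z => truncation n (ρ z) * q z) x v| ≤ K v x := by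
      intro n v x hx
      rw [mem_ball_zero_iff] at hx
      have hx0 := norm_nonneg x
      have h1 : |truncation n (ρ x)| ≤ 1 := (norm_truncation_le n (ρ x)).trans (by
        rw [abs_le]; constructor <;> simp only [ρ] <;> nlinarith)
      have h2 : |ramp n (ρ x)| ≤ 1 := norm_ramp_le_one n (ρ x)
      rw [hder]
      refine (abs_add_le _ _).trans ?_
      rw [abs_mul, abs_mul, abs_mul]
      refine add_le_add (mul_le_of_le_one_left (abs_nonneg _) h1) ?_
      exact mul_le_mul_of_nonneg_left (mul_le_of_le_one_left (abs_nonneg _) h2) (abs_nonneg _)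
    apply tendsto_integral_of_dominated_convergence
      (fun x => |f x| * K 1 x + |g x| * K Complex.I x)
    · intro n
      exact ((hf.mul_continuous_ball (hcont (hψ n) 1)).add
        (hg.mul_continuous_ball (hcont (hψ n) Complex.I))).aestronglyMeasurable
    · exact (IntegrableOn.mul_continuous_ball hf.abs (hK 1)).add
        (IntegrableOn.mul_continuous_ball hg.abs (hK Complex.I))
    · intro n
      filter_upwards [ae_restrict_mem measurableSet_ball] with x hx
      refine (abs_add_le _ _).trans ?_
      rw [abs_mul, abs_mul]
      exact add_le_add (mul_le_mul_of_nonneg_left (hbound n _ x hx) (abs_nonneg _))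
        (mul_le_mul_of_nonneg_left (hbound n _ x hx) (abs_nonneg _))
    · filter_upwards [ae_restrict_mem measurableSet_ball] with x hx
      rw [mem_ball_zero_iff] at hx
      have hx0 := norm_nonneg x
      have hpos : 0 < ρ x := by simp only [ρ]; nlinarith
      have hd : ∀ v, Filter.Tendsto
          (fun n => fderiv ℝ (fun z => truncation n (ρ z) * q z) x v) Filter.atTop
          (nhds (fderiv ℝ (fun z => ρ z * q z) x v)) := by
        intro v
        simp only [hder, hder']
        exact ((tendsto_truncation hpos).mul_const _).add
          (((tendsto_ramp hpos).mul_const _).const_mul _)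
      exact ((hd 1).const_mul _).add ((hd Complex.I).const_mul _)
  simp only [hzero] at hlim
  exact tendsto_nhds_unique hlim tendsto_const_nhds

/-- An integrable function on the disc which is orthogonal to all real polynomials vanishes. -/
lemma ae_eq_zero_of_integral_mul_reMonomial {u : ℂ → ℝ} (hu : IntegrableOn u (ball 0 1))
    (h : ∀ c a b, ∫ x in ball (0 : ℂ) 1, u x * reMonomial c a b x = 0) :
    ∀ᵐ x ∂volume.restrict (ball (0:ℂ) 1), u x = 0 := by
  rw [ae_restrict_iff' measurableSet_ball]
  refine isOpen_ball.ae_eq_zero_of_integral_contDiff_smul_eq_zero hu.locallyIntegrableOn ?_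
  intro g hg _ hgs
  let s : Set ℂ := closedBall 0 1
  have : CompactSpace s := isCompact_iff_compactSpace.1 (isCompact_closedBall 0 1)
  have hpoly : ∀ p ∈ (polynomialFunctions s).starClosure, ∃ H : ℂ → ℂ, Continuous H ∧
      (∀ x : s, H x = p x) ∧ ∀ c, ∫ x in ball (0 : ℂ) 1, u x * (c * H x).re = 0 := by
    intro p hp
    rw [polynomialFunctions.starClosure_eq_adjoin_X, ← StarSubalgebra.mem_toSubalgebra,
      StarAlgebra.adjoin_toSubalgebra, ← Subalgebra.mem_toSubmodule, Algebra.adjoin_eq_span,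
      Set.star_singleton, Set.singleton_union] at hp
    induction hp using Submodule.span_induction with
    | mem p hp =>
      obtain ⟨a, b, rfl⟩ := (Submonoid.mem_closure_pair _ _ _).1 hp
      refine ⟨fun z => z ^ a * (starRingEnd ℂ z) ^ b, by fun_prop, ?_, ?_⟩
      · intro x
        simp
      · intro c
        simpa only [reMonomial, mul_assoc] using h c a b
    | zero => exact ⟨0, continuous_zero, by simp, by simp⟩
    | add p q _ _ hp hq =>
      obtain ⟨H, hH, hHp, hH0⟩ := hp
      obtain ⟨G, hG, hGp, hG0⟩ := hq
      refine ⟨H + G, hH.add hG, fun x => by simp [hHp, hGp], fun c => ?_⟩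
      have h1 : IntegrableOn (fun x => u x * (c * H x).re) (ball 0 1) :=
        hu.mul_continuous_ball (by fun_prop)
      have h2 : IntegrableOn (fun x => u x * (c * G x).re) (ball 0 1) :=
        hu.mul_continuous_ball (by fun_prop)
      have h3 := integral_add h1 h2
      rw [hH0, hG0, add_zero] at h3
      rw [← h3]
      congr 1
      ext x
      simp only [Pi.add_apply, mul_add, add_re]
    | smul k p _ hp =>
      obtain ⟨H, hH, hHp, hH0⟩ := hp
      refine ⟨fun x => k * H x, by fun_prop, fun x => by simp [hHp], fun c => ?_⟩
      simpa only [mul_assoc] using hH0 (c * k)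
  let gs : C(s, ℂ) := ⟨fun x => (g x : ℂ), by have := hg.continuous; fun_prop⟩
  have hint : ∫ x, g x • u x = ∫ x in ball (0 : ℂ) 1, u x * g x := by
    rw [setIntegral_eq_integral_of_forall_compl_eq_zero]
    · simp only [smul_eq_mul, mul_comm]
    · intro x hx
      rw [image_eq_zero_of_notMem_tsupport fun hx' => hx (hgs hx'), mul_zero]
  rw [hint]
  have hle : ∀ ε > 0, |∫ x in ball (0 : ℂ) 1, u x * g x|
      ≤ ε * ∫ x in ball (0 : ℂ) 1, |u x| := by
    intro ε hε
    have hmem : gs ∈ (polynomialFunctions s).starClosure.topologicalClosure := by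
      rw [polynomialFunctions.starClosure_topologicalClosure]; trivial
    obtain ⟨p, hp, hpd⟩ := Metric.mem_closure_iff.1 hmem ε hε
    obtain ⟨H, hH, hHp, hH0⟩ := hpoly p hp
    have hH1 := hH0 1
    simp only [one_mul] at hH1
    have hgI : IntegrableOn (fun x => u x * g x) (ball 0 1) :=
      hu.mul_continuous_ball hg.continuous
    have hHI : IntegrableOn (fun x => u x * (H x).re) (ball 0 1) :=
      hu.mul_continuous_ball (by fun_prop)
    have heq := integral_sub hgI hHI
    rw [hH1, sub_zero] at heq
    rw [← heq, ← integral_const_mul, ← Real.norm_eq_abs]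
    refine norm_integral_le_of_norm_le (hu.abs.const_mul ε) ?_
    filter_upwards [ae_restrict_mem measurableSet_ball] with x hx
    have hxs : x ∈ s := ball_subset_closedBall hx
    have h1 : ‖gs ⟨x, hxs⟩ - p ⟨x, hxs⟩‖ ≤ ε := by
      rw [← dist_eq_norm]
      exact (ContinuousMap.dist_apply_le_dist _).trans hpd.le
    have h2 : |g x - (H x).re| ≤ ε := by
      rw [← hHp] at h1
      simpa [gs] using (abs_re_le_norm _).trans h1
    rw [← mul_sub, norm_mul, mul_comm]
    exact mul_le_mul_of_nonneg_right h2 (abs_nonneg _)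
  have h0 : Filter.Tendsto (fun ε : ℝ => ε * ∫ x in ball (0 : ℂ) 1, |u x|)
      (nhdsWithin 0 (Set.Ioi 0)) (nhds 0) := by
    have : Continuous (fun ε : ℝ => ε * ∫ x in ball (0 : ℂ) 1, |u x|) := by fun_prop
    simpa using (this.tendsto 0).mono_left nhdsWithin_le_nhds
  have := ge_of_tendsto h0 (by filter_upwards [self_mem_nhdsWithin] with ε hε using hle ε hε)
  exact abs_nonpos_iff.1 this

/-- If `u` vanishes almost everywhere on the disc, its reflection vanishes almost everywhere. -/
lemma antiReflect_ae_eq_zero {u : ℂ → ℝ}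
    (h : ∀ᵐ x ∂volume.restrict (ball (0:ℂ) 1), u x = 0) : ∀ᵐ x, antiReflect u x = 0 := by
  rw [ae_restrict_iff' measurableSet_ball] at h
  set N : Set ℂ := {x | ¬ (x ∈ ball (0 : ℂ) 1 → u x = 0)} with hN
  have hN0 : volume N = 0 := h
  have himg : volume (Set.image (fun z : ℂ => (starRingEnd ℂ z)⁻¹) (N \ {0})) = 0 := by
    refine addHaar_image_eq_zero_of_differentiableOn_of_addHaar_eq_zero volume ?_
      (measure_mono_null Set.sdiff_subset hN0)
    intro z hz
    have h1 : DifferentiableAt ℝ (fun z : ℂ => conjCLE z) z := conjCLE.differentiableAt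
    refine (DifferentiableAt.inv h1 ?_).differentiableWithinAt
    simpa using hz.2
  have hsph : volume (sphere (0 : ℂ) 1) = 0 := Measure.addHaar_sphere volume 0 1
  have hx0 := measure_eq_zero_iff_ae_notMem.1 himg
  filter_upwards [h, hx0, measure_eq_zero_iff_ae_notMem.1 hsph] with x h1 h2 h3
  rw [antiReflect]
  split_ifs with hx
  · exact h1 hx
  · have hx1 : 1 < ‖x‖ := by
      rw [mem_ball_zero_iff, not_lt] at hx
      rw [mem_sphere_zero_iff_norm] at h3
      exact lt_of_le_of_ne hx (Ne.symm h3)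
    have hxne : x ≠ 0 := norm_pos_iff.1 (zero_lt_one.trans hx1)
    by_contra hcon
    refine h2 ⟨(starRingEnd ℂ x)⁻¹, ⟨?_, by simpa using hxne⟩, by simp⟩
    simp only [hN, Set.mem_ofPred_eq, Classical.not_imp]
    refine ⟨?_, fun h0 => hcon (by rw [h0, neg_zero])⟩
    rw [mem_ball_zero_iff, norm_inv, norm_conj]
    exact inv_lt_one_of_one_lt₀ hx1

/-- Let `u ∈ W^{1,1}₀(D)` (with weak gradient `U`, zero boundary trace encoded by
the fact that the extension of `u` by zero has the extension of `U` by zero as weak gradient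
on all of `ℝ²`) be a distributional solution of the Dirichlet problem with `f = 0`, i.e.
`∫_D ∇u·∇ψ = 0` for all `C¹` functions `ψ` compactly supported in `D`. Then the antisymmetric
reflection `û` is (weakly) harmonic on all of `ℝ²`, and consequently `u ≡ 0`. -/
theorem stmt_9 (u : ℂ → ℝ) (U : ℂ → ℂ)
    (hu : IntegrableOn u (ball 0 1)) (hU : IntegrableOn U (ball 0 1))
    -- zero boundary values: the zero extensions satisfy the weak gradient identity on ℝ²
    (htrace : ∀ φ : ℂ → ℝ, ContDiff ℝ 1 φ → HasCompactSupport φ →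
      (∫ x, Set.indicator (ball (0:ℂ) 1) u x * fderiv ℝ φ x 1)
        = - ∫ x, Set.indicator (ball (0:ℂ) 1) (fun y => (U y).re) x * φ x
      ∧ (∫ x, Set.indicator (ball (0:ℂ) 1) u x * fderiv ℝ φ x Complex.I)
        = - ∫ x, Set.indicator (ball (0:ℂ) 1) (fun y => (U y).im) x * φ x)
    -- distributional solution of -Δu = 0 in D
    (hharm : ∀ ψ : ℂ → ℝ, ContDiff ℝ 1 ψ → HasCompactSupport ψ → tsupport ψ ⊆ ball 0 1 →
      (∫ x in ball (0:ℂ) 1,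
        ((U x).re * fderiv ℝ ψ x 1 + (U x).im * fderiv ℝ ψ x Complex.I)) = 0) :
    (∀ ψ : ℂ → ℝ, ContDiff ℝ 2 ψ → HasCompactSupport ψ →
      (∫ x, antiReflect u x * lap ψ x) = 0)
    ∧ (∀ᵐ x ∂volume.restrict (ball (0:ℂ) 1), u x = 0) := by
  have hUre : IntegrableOn (fun y => (U y).re) (ball 0 1) := hU.re
  have hUim : IntegrableOn (fun y => (U y).im) (ball 0 1) := hU.im
  have hlap : ∀ c a b, ∫ x in ball (0 : ℂ) 1,
      u x * lap (fun z => (1 - ‖z‖ ^ 2) * reMonomial c a b z) x = 0 := by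
    intro c a b
    set ψ : ℂ → ℝ := fun z => (1 - ‖z‖ ^ 2) * reMonomial c a b z with hψdef
    have hψ : ContDiff ℝ 2 ψ :=
      (contDiff_const.sub (contDiff_norm_sq ℝ)).mul (contDiff_reMonomial c a b)
    have hψ' : ∀ v, ContDiff ℝ 1 (fun y => fderiv ℝ ψ y v) := fun v =>
      (hψ.fderiv_right (m := 1) (by norm_num)).clm_apply contDiff_const
    have hcont : ∀ v, Continuous (fun x => fderiv ℝ (fun y => fderiv ℝ ψ y v) x v) := fun v =>
      ((hψ' v).continuous_fderiv one_ne_zero).clm_apply continuous_const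
    have h1 := integral_ball_mul_fderiv (fun φ h1 h2 => (htrace φ h1 h2).1) (hψ' 1)
    have h2 := integral_ball_mul_fderiv (fun φ h1 h2 => (htrace φ h1 h2).2) (hψ' Complex.I)
    have h3 := integral_ball_grad_one_sub_norm_sq_mul hUre hUim hharm
      (contDiff_reMonomial c a b)
    rw [integral_add (hUre.mul_continuous_ball (hψ' 1).continuous)
      (hUim.mul_continuous_ball (hψ' Complex.I).continuous)] at h3
    simp only [lap, mul_add]
    rw [integral_add (hu.mul_continuous_ball (hcont 1))
      (hu.mul_continuous_ball (hcont Complex.I)), h1, h2]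
    linarith
  have hint : ∀ c a b, IntegrableOn (fun x => u x * reMonomial c a b x) (ball 0 1) :=
    fun c a b => hu.mul_continuous_ball (contDiff_reMonomial (n := 1) c a b).continuous
  have hrec : ∀ c a b,
      ∫ x in ball (0 : ℂ) 1, u x * reMonomial (4 * (a + 1 : ℕ) * (b + 1 : ℕ) * c) a b x
        = ∫ x in ball (0 : ℂ) 1, u x * reMonomial (4 * a * b * c) (a - 1) (b - 1) x := by
    intro c a b
    have h1 := hlap c a b
    simp only [lap_one_sub_norm_sq_mul_reMonomial, mul_sub] at h1
    rw [integral_sub (hint _ _ _) (hint _ _ _)] at h1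
    push_cast
    linarith
  have hmono : ∀ b a c, ∫ x in ball (0 : ℂ) 1, u x * reMonomial c a b x = 0 := by
    have hscale : ∀ (a b : ℕ) (c : ℂ),
        4 * (a + 1 : ℕ) * (b + 1 : ℕ) * (c / (4 * (a + 1 : ℕ) * (b + 1 : ℕ))) = c := by
      intro a b c
      have h1 : ((a + 1 : ℕ) : ℂ) ≠ 0 := Nat.cast_ne_zero.2 a.succ_ne_zero
      have h2 : ((b + 1 : ℕ) : ℂ) ≠ 0 := Nat.cast_ne_zero.2 b.succ_ne_zero
      field_simp
    intro b
    induction b with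
    | zero =>
      intro a c
      have := hrec (c / (4 * (a + 1 : ℕ) * (0 + 1 : ℕ))) a 0
      rw [hscale] at this
      rw [this]
      simp [reMonomial]
    | succ b ih =>
      intro a c
      have := hrec (c / (4 * (a + 1 : ℕ) * (b + 1 + 1 : ℕ))) a (b + 1)
      rw [hscale] at this
      rw [this, Nat.add_sub_cancel, ih]
  have hzero := ae_eq_zero_of_integral_mul_reMonomial hu fun c a b => hmono b a c
  refine ⟨fun ψ _ _ => integral_eq_zero_of_ae ?_, hzero⟩
  filter_upwards [antiReflect_ae_eq_zero hzero] with x hx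
  simp [hx]
end

section
/- Let D ⊂ ℝ² be the unit disc and let v ∈ W^{1,1}(D) satisfy ∫_D ∇v · ∇ψ = 0 for all ψ ∈ C¹(closure of D) (distributional Neumann problem with f = 0). Then the symmetric reflection v̂(x) = v(x) for x ∈ D, v̂(x) = v(x/|x|²) for x ∉ D is harmonic on ℝ² and hence v is constant. -/
open MeasureTheory Metric Complex Classical

/-- The symmetric reflection `v̂` of `v` across the unit circle:
`v̂(x) = v(x)` on `D`, `v̂(x) = v(x*)` with `x* = x/|x|² = (conj x)⁻¹` outside. -/
noncomputable def symReflect (v : ℂ → ℝ) (x : ℂ) : ℝ :=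
  if x ∈ ball (0 : ℂ) 1 then v x else v ((starRingEnd ℂ) x)⁻¹

/-- `V` is the weak gradient of `v` on the unit disc. -/
def IsWeakGradient (v : ℂ → ℝ) (V : ℂ → ℂ) : Prop :=
  ∀ φ : ℂ → ℝ, ContDiff ℝ 1 φ → HasCompactSupport φ → tsupport φ ⊆ ball 0 1 →
    (∫ x in ball (0:ℂ) 1, v x * fderiv ℝ φ x 1)
      = - ∫ x in ball (0:ℂ) 1, (V x).re * φ x
    ∧ (∫ x in ball (0:ℂ) 1, v x * fderiv ℝ φ x Complex.I)
      = - ∫ x in ball (0:ℂ) 1, (V x).im * φ x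

/-- The field `V` satisfies the weak homogeneous Neumann condition on the unit disc. -/
def IsWeakNeumann (V : ℂ → ℂ) : Prop :=
  ∀ ψ : ℂ → ℝ, ContDiff ℝ 1 ψ →
    (∫ x in ball (0:ℂ) 1,
      ((V x).re * fderiv ℝ ψ x 1 + (V x).im * fderiv ℝ ψ x Complex.I)) = 0

/-- The radial cutoff `x ↦ S(n(1 - |x|²) - 1)`, where `S` is the smooth transition. -/
noncomputable def discCutoff (n : ℝ) (x : ℂ) : ℝ :=
  Real.smoothTransition (n * (1 - (x.re ^ 2 + x.im ^ 2)) - 1)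

lemma norm_sq_eq_re_im (x : ℂ) : x.re ^ 2 + x.im ^ 2 = ‖x‖ ^ 2 := by
  rw [← Complex.normSq_eq_norm_sq, Complex.normSq_apply]; ring

lemma contDiff_discCutoff (n : ℝ) : ContDiff ℝ 1 (discCutoff n) := by
  have h1 : ContDiff ℝ 1 (fun x : ℂ => x.re) := Complex.reCLM.contDiff
  have h2 : ContDiff ℝ 1 (fun x : ℂ => x.im) := Complex.imCLM.contDiff
  have h := Real.smoothTransition.contDiff (n := 1)
  unfold discCutoff
  exact h.comp (by fun_prop)

lemma fderiv_discCutoff (n : ℝ) (x h : ℂ) :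
    fderiv ℝ (discCutoff n) x h =
      deriv Real.smoothTransition (n * (1 - (x.re ^ 2 + x.im ^ 2)) - 1)
        * (-(2 * n) * (x.re * h.re + x.im * h.im)) := by
  have h1 : HasFDerivAt (fun x : ℂ => x.re) Complex.reCLM x := Complex.reCLM.hasFDerivAt
  have h2 : HasFDerivAt (fun x : ℂ => x.im) Complex.imCLM x := Complex.imCLM.hasFDerivAt
  have h3 := ((((h1.pow 2).add (h2.pow 2)).const_sub 1).const_mul n).sub_const 1
  have hS : HasDerivAt Real.smoothTransition
      (deriv Real.smoothTransition (n * (1 - (x.re ^ 2 + x.im ^ 2)) - 1))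
      (n * (1 - (x.re ^ 2 + x.im ^ 2)) - 1) :=
    ((Real.smoothTransition.contDiff (n := 1)).differentiable (by simp) _).hasDerivAt
  have h4 := hS.comp_hasFDerivAt x h3
  have h5 : fderiv ℝ (discCutoff n) x = _ := h4.fderiv
  rw [h5]
  simp
  ring_nf

lemma deriv_smoothTransition_of_gt {t : ℝ} (ht : 1 < t) :
    deriv Real.smoothTransition t = 0 := by
  have : Real.smoothTransition =ᶠ[nhds t] fun _ => 1 := by
    filter_upwards [lt_mem_nhds ht] with y hy using Real.smoothTransition.one_of_one_le hy.le
  rw [this.deriv_eq]; simp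

lemma deriv_smoothTransition_of_lt {t : ℝ} (ht : t < 0) :
    deriv Real.smoothTransition t = 0 := by
  have : Real.smoothTransition =ᶠ[nhds t] fun _ => 0 := by
    filter_upwards [gt_mem_nhds ht] with y hy using Real.smoothTransition.zero_of_nonpos hy.le
  rw [this.deriv_eq]; simp

lemma exists_abs_deriv_smoothTransition_le :
    ∃ M : ℝ, 0 ≤ M ∧ ∀ t, |deriv Real.smoothTransition t| ≤ M := by
  have hc : Continuous (deriv Real.smoothTransition) :=
    (Real.smoothTransition.contDiff (n := 1)).continuous_deriv (by simp)
  obtain ⟨M, hM⟩ := (isCompact_Icc (a := (0:ℝ)) (b := 1)).exists_bound_of_continuousOn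
    hc.continuousOn
  have hM0 : 0 ≤ M := (norm_nonneg _).trans (hM 0 (by simp))
  refine ⟨M, hM0, fun t => ?_⟩
  by_cases h0 : t < 0
  · simpa [deriv_smoothTransition_of_lt h0] using hM0
  by_cases h1 : 1 < t
  · simpa [deriv_smoothTransition_of_gt h1] using hM0
  exact hM t ⟨not_lt.1 h0, not_lt.1 h1⟩

lemma tsupport_discCutoff_mul_subset {n : ℝ} (hn : 0 < n) (g : ℂ → ℝ) :
    tsupport (fun x => discCutoff n x * g x) ⊆ ball 0 1 := by
  have hcl : IsClosed {x : ℂ | ‖x‖ ^ 2 ≤ 1 - 1 / n} := isClosed_le (by fun_prop) (by fun_prop)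
  refine (closure_minimal ?_ hcl).trans ?_
  · intro x hx
    by_contra hx'
    simp only [Set.mem_ofPred_eq, not_le] at hx'
    apply hx
    have : discCutoff n x = 0 := by
      apply Real.smoothTransition.zero_of_nonpos
      rw [norm_sq_eq_re_im]
      have h2 : n * (1 - ‖x‖ ^ 2) ≤ n * (1 / n) := by gcongr; linarith
      rw [mul_one_div_cancel hn.ne'] at h2
      linarith
    simp [this]
  · intro x hx
    have hx' : ‖x‖ ^ 2 ≤ 1 - 1 / n := hx
    have : 0 < 1 / n := by positivity
    rw [mem_ball_zero_iff]
    nlinarith [norm_nonneg x]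

lemma exists_abs_le_one_sub_norm {B : ℂ → ℝ} (hB : ContDiff ℝ 1 B)
    (h0 : ∀ x, ‖x‖ = 1 → B x = 0) :
    ∃ K : ℝ, 0 ≤ K ∧ ∀ x ∈ ball (0:ℂ) 1, |B x| ≤ K * (1 - ‖x‖) := by
  obtain ⟨K, hK⟩ := hB.contDiffOn.exists_lipschitzOnWith (s := closedBall (0:ℂ) 1) (by simp)
    (convex_closedBall _ _) (isCompact_closedBall _ _)
  refine ⟨K, K.2, fun x hx => ?_⟩
  rw [mem_ball_zero_iff] at hx
  obtain ⟨y, hy, hxy⟩ : ∃ y : ℂ, ‖y‖ = 1 ∧ ‖x - y‖ = 1 - ‖x‖ := by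
    by_cases hx0 : x = 0
    · exact ⟨1, by simp, by simp [hx0]⟩
    have hx1 : ‖x‖ ≠ 0 := norm_ne_zero_iff.2 hx0
    refine ⟨(‖x‖⁻¹ : ℝ) • x, by simp [hx1], ?_⟩
    have : x - (‖x‖⁻¹ : ℝ) • x = (1 - ‖x‖⁻¹ : ℝ) • x := by rw [sub_smul, one_smul]
    rw [this, norm_smul, Real.norm_eq_abs, abs_of_nonpos, neg_sub, sub_mul,
      inv_mul_cancel₀ hx1, one_mul]
    have := (one_le_inv₀ (norm_pos_iff.2 hx0)).2 hx.le
    linarith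
  have := hK.dist_le_mul x (by simpa using hx.le) y (by simpa using hy.le)
  rwa [h0 y hy, dist_zero_right, dist_eq_norm, hxy] at this

lemma fderiv_apply_eq_re_im (ψ : ℂ → ℝ) (x h : ℂ) :
    fderiv ℝ ψ x h = h.re * fderiv ℝ ψ x 1 + h.im * fderiv ℝ ψ x Complex.I := by
  conv_lhs => rw [← Complex.re_add_im h]
  have h1 : (h.re : ℂ) = h.re • (1 : ℂ) := by simp
  have h2 : (h.im : ℂ) * Complex.I = h.im • Complex.I := by simp
  rw [h1, h2, map_add, map_smul, map_smul, smul_eq_mul, smul_eq_mul]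

lemma integrableOn_ball_mul {v g : ℂ → ℝ} (hv : IntegrableOn v (ball 0 1)) (hg : Continuous g) :
    IntegrableOn (fun x => v x * g x) (ball 0 1) := by
  obtain ⟨C, hC⟩ := (isCompact_closedBall (0:ℂ) 1).exists_bound_of_continuousOn hg.continuousOn
  refine Integrable.mul_bdd (c := C) hv hg.aestronglyMeasurable ?_
  filter_upwards [ae_restrict_mem measurableSet_ball] with x hx
    using hC x (ball_subset_closedBall hx)

lemma integrableOn_re_im {V : ℂ → ℂ} (hV : IntegrableOn V (ball 0 1)) :
    IntegrableOn (fun x => (V x).re) (ball 0 1) ∧ IntegrableOn (fun x => (V x).im) (ball 0 1) :=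
  ⟨Integrable.re hV, Integrable.im hV⟩

/-- Green's formula for the cut-off gradient of `ψ`. -/
lemma integral_discCutoff_mul {v : ℂ → ℝ} {V : ℂ → ℂ}
    (hv : IntegrableOn v (ball 0 1)) (hV : IntegrableOn V (ball 0 1))
    (hgrad : IsWeakGradient v V) {ψ : ℂ → ℝ} (hψ : ContDiff ℝ 2 ψ) {n : ℝ} (hn : 0 < n) :
    (∫ x in ball (0:ℂ) 1, v x * (discCutoff n x * lap ψ x
      + deriv Real.smoothTransition (n * (1 - (x.re ^ 2 + x.im ^ 2)) - 1)
        * (-(2 * n) * fderiv ℝ ψ x x)))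
    = - ∫ x in ball (0:ℂ) 1, discCutoff n x *
      ((V x).re * fderiv ℝ ψ x 1 + (V x).im * fderiv ℝ ψ x Complex.I) := by
  have hd : ∀ h : ℂ, ContDiff ℝ 1 (fun x => fderiv ℝ ψ x h) := fun h =>
    (hψ.fderiv_right (m := 1) (by norm_num)).clm_apply contDiff_const
  have hφ : ∀ h : ℂ, ContDiff ℝ 1 (fun x => discCutoff n x * fderiv ℝ ψ x h) := fun h =>
    (contDiff_discCutoff n).mul (hd h)
  have hts : ∀ h : ℂ, tsupport (fun x => discCutoff n x * fderiv ℝ ψ x h) ⊆ ball 0 1 :=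
    fun h => tsupport_discCutoff_mul_subset hn _
  have hcs : ∀ h : ℂ, HasCompactSupport (fun x => discCutoff n x * fderiv ℝ ψ x h) := fun h =>
    (isCompact_closedBall (0:ℂ) 1).of_isClosed_subset (isClosed_tsupport _)
      ((hts h).trans ball_subset_closedBall)
  have e1 := (hgrad _ (hφ 1) (hcs 1) (hts 1)).1
  have e2 := (hgrad _ (hφ Complex.I) (hcs Complex.I) (hts Complex.I)).2
  have hVr := integrableOn_re_im hV
  have hcf : ∀ h k : ℂ, Continuous
      (fun x => fderiv ℝ (fun x => discCutoff n x * fderiv ℝ ψ x h) x k) := fun h k =>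
    ((hφ h).continuous_fderiv (by simp)).clm_apply continuous_const
  have hfd : ∀ x h k : ℂ, fderiv ℝ (fun x => discCutoff n x * fderiv ℝ ψ x h) x k
      = discCutoff n x * fderiv ℝ (fun y => fderiv ℝ ψ y h) x k
        + fderiv ℝ ψ x h * fderiv ℝ (discCutoff n) x k := by
    intro x h k
    rw [fderiv_fun_mul ((contDiff_discCutoff n).differentiable (by simp) x)
      ((hd h).differentiable (by simp) x)]
    simp
  calc _ = (∫ x in ball (0:ℂ) 1,
        (v x * fderiv ℝ (fun x => discCutoff n x * fderiv ℝ ψ x 1) x 1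
        + v x * fderiv ℝ (fun x => discCutoff n x * fderiv ℝ ψ x Complex.I) x Complex.I)) := by
        congr 1 with x
        rw [hfd, hfd, fderiv_discCutoff, fderiv_discCutoff, fderiv_apply_eq_re_im ψ x x, lap]
        simp
        ring
    _ = - ∫ x in ball (0:ℂ) 1, ((V x).re * (discCutoff n x * fderiv ℝ ψ x 1)
        + (V x).im * (discCutoff n x * fderiv ℝ ψ x Complex.I)) := by
        rw [integral_add (integrableOn_ball_mul hv (hcf _ _)) (integrableOn_ball_mul hv (hcf _ _)),
          integral_add (integrableOn_ball_mul hVr.1 (hφ _).continuous)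
            (integrableOn_ball_mul hVr.2 (hφ _).continuous), e1, e2, neg_add]
    _ = _ := by
        congr 2 with x
        ring

lemma eventually_discCutoff {x : ℂ} (hx : x ∈ ball (0:ℂ) 1) :
    ∀ᶠ n : ℕ in Filter.atTop, 1 < ((n:ℝ) + 1) * (1 - (x.re ^ 2 + x.im ^ 2)) - 1 := by
  rw [mem_ball_zero_iff] at hx
  have hpos : 0 < 1 - (x.re ^ 2 + x.im ^ 2) := by
    rw [norm_sq_eq_re_im]; nlinarith [norm_nonneg x]
  have : Filter.Tendsto (fun n : ℕ => ((n:ℝ) + 1) * (1 - (x.re ^ 2 + x.im ^ 2)))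
      Filter.atTop Filter.atTop :=
    (Filter.tendsto_atTop_add_const_right _ _ tendsto_natCast_atTop_atTop).atTop_mul_const hpos
  filter_upwards [this.eventually_gt_atTop 2] with n hn
  linarith

lemma continuous_lap {ψ : ℂ → ℝ} (hψ : ContDiff ℝ 2 ψ) : Continuous (lap ψ) := by
  have hd : ∀ h : ℂ, ContDiff ℝ 1 (fun x => fderiv ℝ ψ x h) := fun h =>
    (hψ.fderiv_right (m := 1) (by norm_num)).clm_apply contDiff_const
  have h : ∀ h : ℂ, Continuous (fun x => fderiv ℝ (fun y => fderiv ℝ ψ y h) x h) := fun h =>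
    ((hd h).continuous_fderiv (by simp)).clm_apply continuous_const
  exact (h 1).add (h Complex.I)

/-- A weak Neumann solution is orthogonal to `Δψ` whenever `ψ` has vanishing normal derivative. -/
theorem integral_mul_lap_eq_zero {v : ℂ → ℝ} {V : ℂ → ℂ}
    (hv : IntegrableOn v (ball 0 1)) (hV : IntegrableOn V (ball 0 1))
    (hgrad : IsWeakGradient v V) (hsol : IsWeakNeumann V)
    {ψ : ℂ → ℝ} (hψ : ContDiff ℝ 2 ψ) (hbd : ∀ x, ‖x‖ = 1 → fderiv ℝ ψ x x = 0) :
    ∫ x in ball (0:ℂ) 1, v x * lap ψ x = 0 := by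
  have hVr := integrableOn_re_im hV
  have hd : ∀ h : ℂ, Continuous (fun x => fderiv ℝ ψ x h) := fun h =>
    (hψ.continuous_fderiv (by simp)).clm_apply continuous_const
  have hB : ContDiff ℝ 1 (fun x => fderiv ℝ ψ x x) :=
    (hψ.fderiv_right (m := 1) (by norm_num)).clm_apply contDiff_id
  obtain ⟨K, hK0, hK⟩ := exists_abs_le_one_sub_norm hB hbd
  obtain ⟨M, hM0, hM⟩ := exists_abs_deriv_smoothTransition_le
  have hS' : Continuous (deriv Real.smoothTransition) :=
    (Real.smoothTransition.contDiff (n := 1)).continuous_deriv (by simp)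
  have hlap := continuous_lap hψ
  have hχ : ∀ n : ℝ, Continuous (discCutoff n) := fun n => (contDiff_discCutoff n).continuous
  obtain ⟨C, hC⟩ := (isCompact_closedBall (0:ℂ) 1).exists_bound_of_continuousOn hlap.continuousOn
  have hχ1 : ∀ (n : ℝ) (x : ℂ), |discCutoff n x| ≤ 1 := fun n x => by
    rw [discCutoff, abs_of_nonneg (Real.smoothTransition.nonneg _)]
    exact Real.smoothTransition.le_one _
  have hL : Filter.Tendsto (fun n : ℕ => ∫ x in ball (0:ℂ) 1, v x * (discCutoff (n + 1) x * lap ψ x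
      + deriv Real.smoothTransition ((n + 1) * (1 - (x.re ^ 2 + x.im ^ 2)) - 1)
        * (-(2 * (n + 1)) * fderiv ℝ ψ x x))) Filter.atTop
      (nhds (∫ x in ball (0:ℂ) 1, v x * lap ψ x)) := by
    refine tendsto_integral_of_dominated_convergence (fun x => |v x| * (C + 4 * M * K)) ?_ ?_ ?_ ?_
    · intro n
      refine hv.aestronglyMeasurable.mul (Continuous.aestronglyMeasurable ?_)
      have h1 := hχ (n + 1)
      have h2 := hB.continuous
      fun_prop
    · exact (Integrable.abs hv).mul_const _
    · intro n
      filter_upwards [ae_restrict_mem measurableSet_ball] with x hx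
      rw [norm_mul, Real.norm_eq_abs]
      refine mul_le_mul_of_nonneg_left ((norm_add_le _ _).trans (add_le_add ?_ ?_)) (abs_nonneg _)
      · rw [norm_mul]
        have h1 := hC x (ball_subset_closedBall hx)
        have h2 := hχ1 (n + 1) x
        rw [Real.norm_eq_abs (discCutoff _ _)]
        nlinarith [norm_nonneg (lap ψ x)]
      · have hx' := mem_ball_zero_iff.1 hx
        by_cases ht : 1 < ((n:ℝ) + 1) * (1 - (x.re ^ 2 + x.im ^ 2)) - 1
        · rw [deriv_smoothTransition_of_gt ht]
          simp; positivity
        · rw [norm_sq_eq_re_im] at *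
          have hn : (0:ℝ) < n + 1 := by positivity
          have h3 : ((n:ℝ) + 1) * (1 - ‖x‖) ≤ 2 := by
            have : ((n:ℝ) + 1) * (1 - ‖x‖) ≤ ((n:ℝ) + 1) * (1 - ‖x‖ ^ 2) := by
              gcongr
              nlinarith [norm_nonneg x]
            linarith
          have h4 := hK x hx
          have h5 := hM (((n:ℝ) + 1) * (1 - ‖x‖ ^ 2) - 1)
          rw [norm_mul, norm_mul, norm_neg, Real.norm_eq_abs, Real.norm_eq_abs, Real.norm_eq_abs,
            abs_of_pos (by positivity : (0:ℝ) < 2 * (n + 1))]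
          calc _ ≤ M * (2 * (n + 1) * (K * (1 - ‖x‖))) := by gcongr
            _ = 2 * M * K * (((n:ℝ) + 1) * (1 - ‖x‖)) := by ring
            _ ≤ 2 * M * K * 2 := by gcongr
            _ = _ := by ring
    · filter_upwards [ae_restrict_mem measurableSet_ball] with x hx
      refine tendsto_const_nhds.congr' ?_
      filter_upwards [eventually_discCutoff hx] with n hn
      rw [deriv_smoothTransition_of_gt hn, discCutoff, Real.smoothTransition.one_of_one_le hn.le]
      ring
  have hG : IntegrableOn (fun x => (V x).re * fderiv ℝ ψ x 1 + (V x).im * fderiv ℝ ψ x Complex.I)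
      (ball 0 1) :=
    (integrableOn_ball_mul hVr.1 (hd 1)).add (integrableOn_ball_mul hVr.2 (hd Complex.I))
  have hR : Filter.Tendsto (fun n : ℕ => - ∫ x in ball (0:ℂ) 1, discCutoff (n + 1) x *
      ((V x).re * fderiv ℝ ψ x 1 + (V x).im * fderiv ℝ ψ x Complex.I)) Filter.atTop
      (nhds (- ∫ x in ball (0:ℂ) 1,
        ((V x).re * fderiv ℝ ψ x 1 + (V x).im * fderiv ℝ ψ x Complex.I))) := by
    refine (tendsto_integral_of_dominated_convergence
      (fun x => |(V x).re * fderiv ℝ ψ x 1 + (V x).im * fderiv ℝ ψ x Complex.I|) ?_ ?_ ?_ ?_).neg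
    · intro n
      exact (hχ _).aestronglyMeasurable.mul hG.aestronglyMeasurable
    · exact Integrable.abs hG
    · intro n
      refine Filter.Eventually.of_forall fun x => ?_
      rw [norm_mul, Real.norm_eq_abs, Real.norm_eq_abs]
      exact mul_le_of_le_one_left (abs_nonneg _) (hχ1 _ _)
    · filter_upwards [ae_restrict_mem measurableSet_ball] with x hx
      refine tendsto_const_nhds.congr' ?_
      filter_upwards [eventually_discCutoff hx] with n hn
      rw [discCutoff, Real.smoothTransition.one_of_one_le hn.le, one_mul]
  rw [hsol ψ (hψ.of_le (by norm_num)), neg_zero] at hR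
  refine tendsto_nhds_unique hL (hR.congr fun n => ?_)
  exact (integral_discCutoff_mul hv hV hgrad hψ (by positivity)).symm

/-- The monomial `z ^ a * conj z ^ b`. -/
noncomputable def conjMonomial (a b : ℕ) (z : ℂ) : ℂ := z ^ a * (starRingEnd ℂ z) ^ b

lemma contDiff_conjMonomial (a b : ℕ) : ContDiff ℝ 2 (conjMonomial a b) := by
  have h : ContDiff ℝ 2 (fun z : ℂ => starRingEnd ℂ z) := Complex.conjCLE.contDiff
  unfold conjMonomial
  fun_prop

lemma fderiv_conjMonomial (a b : ℕ) (z h : ℂ) :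
    fderiv ℝ (conjMonomial a b) z h =
      a * conjMonomial (a - 1) b z * h + b * conjMonomial a (b - 1) z * starRingEnd ℂ h := by
  have h1 : HasFDerivAt (fun z : ℂ => z) (ContinuousLinearMap.id ℝ ℂ) z := hasFDerivAt_id z
  have h2 : HasFDerivAt (fun z : ℂ => starRingEnd ℂ z) (Complex.conjCLE : ℂ →L[ℝ] ℂ) z :=
    Complex.conjCLE.hasFDerivAt
  have h3 : fderiv ℝ (conjMonomial a b) z = _ := ((h1.pow a).mul (h2.pow b)).fderiv
  rw [h3]
  simp [conjMonomial]
  ring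

lemma fderiv_re {F : ℂ → ℂ} (hF : Differentiable ℝ F) (z h : ℂ) :
    fderiv ℝ (fun y => (F y).re) z h = (fderiv ℝ F z h).re := by
  have : fderiv ℝ (fun y => (F y).re) z = _ :=
    (Complex.reCLM.hasFDerivAt.comp z (hF z).hasFDerivAt).fderiv
  rw [this]; simp

lemma fderiv_im {F : ℂ → ℂ} (hF : Differentiable ℝ F) (z h : ℂ) :
    fderiv ℝ (fun y => (F y).im) z h = (fderiv ℝ F z h).im := by
  have : fderiv ℝ (fun y => (F y).im) z = _ :=
    (Complex.imCLM.hasFDerivAt.comp z (hF z).hasFDerivAt).fderiv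
  rw [this]; simp

lemma integrableOn_ball_ofReal_mul {v : ℂ → ℝ} {g : ℂ → ℂ} (hv : IntegrableOn v (ball 0 1))
    (hg : Continuous g) : IntegrableOn (fun x => (v x : ℂ) * g x) (ball 0 1) := by
  obtain ⟨C, hC⟩ := (isCompact_closedBall (0:ℂ) 1).exists_bound_of_continuousOn hg.continuousOn
  refine Integrable.mul_bdd (c := C) (Integrable.ofReal hv) hg.aestronglyMeasurable ?_
  filter_upwards [ae_restrict_mem measurableSet_ball] with x hx
    using hC x (ball_subset_closedBall hx)

lemma integral_ofReal_mul_complex_lap_eq_zero {v : ℂ → ℝ} {V : ℂ → ℂ}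
    (hv : IntegrableOn v (ball 0 1)) (hV : IntegrableOn V (ball 0 1))
    (hgrad : IsWeakGradient v V) (hsol : IsWeakNeumann V)
    {F : ℂ → ℂ} (hF : ContDiff ℝ 2 F) (hbd : ∀ x, ‖x‖ = 1 → fderiv ℝ F x x = 0)
    {L : ℂ → ℂ} (hLc : Continuous L)
    (hL : ∀ x, L x = fderiv ℝ (fun y => fderiv ℝ F y 1) x 1
      + fderiv ℝ (fun y => fderiv ℝ F y Complex.I) x Complex.I) :
    ∫ x in ball (0:ℂ) 1, (v x : ℂ) * L x = 0 := by
  have hd : ∀ h : ℂ, Differentiable ℝ (fun x => fderiv ℝ F x h) := fun h =>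
    ((hF.fderiv_right (m := 1) (by norm_num)).clm_apply contDiff_const).differentiable (by simp)
  have hF1 : Differentiable ℝ F := hF.differentiable (by simp)
  have hre : ContDiff ℝ 2 (fun x => (F x).re) := Complex.reCLM.contDiff.comp hF
  have him : ContDiff ℝ 2 (fun x => (F x).im) := Complex.imCLM.contDiff.comp hF
  have h1 := integral_mul_lap_eq_zero hv hV hgrad hsol hre
    (fun x hx => by rw [fderiv_re hF1, hbd x hx, Complex.zero_re])
  have h2 := integral_mul_lap_eq_zero hv hV hgrad hsol him
    (fun x hx => by rw [fderiv_im hF1, hbd x hx, Complex.zero_im])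
  have e1 : ∀ x, lap (fun x => (F x).re) x = (L x).re := fun x => by
    simp only [lap, fderiv_re hF1, fderiv_re (hd _), hL, Complex.add_re]
  have e2 : ∀ x, lap (fun x => (F x).im) x = (L x).im := fun x => by
    simp only [lap, fderiv_im hF1, fderiv_im (hd _), hL, Complex.add_im]
  have hint := integrableOn_ball_ofReal_mul hv hLc
  have r1 := integral_re hint
  have r2 := integral_im hint
  simp only [RCLike.re_to_complex, RCLike.im_to_complex, Complex.re_ofReal_mul,
    Complex.im_ofReal_mul] at r1 r2
  simp only [e1] at h1
  simp only [e2] at h2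
  exact Complex.ext (by rw [← r1, h1, Complex.zero_re]) (by rw [← r2, h2, Complex.zero_im])

lemma continuous_conjMonomial (a b : ℕ) : Continuous (conjMonomial a b) :=
  (contDiff_conjMonomial a b).continuous

lemma fderiv_sub_conjMonomial (α β : ℂ) (a b c d : ℕ) (z h : ℂ) :
    fderiv ℝ (fun z => α * conjMonomial a b z - β * conjMonomial c d z) z h
      = α * fderiv ℝ (conjMonomial a b) z h - β * fderiv ℝ (conjMonomial c d) z h := by
  have h1 : ∀ a b, DifferentiableAt ℝ (conjMonomial a b) z := fun a b =>
    (contDiff_conjMonomial a b).differentiable (by simp) z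
  rw [fderiv_fun_sub ((h1 a b).const_mul α) ((h1 c d).const_mul β), fderiv_const_mul (h1 a b),
    fderiv_const_mul (h1 c d)]
  simp

lemma conjMonomial_succ_succ_of_norm_eq_one {x : ℂ} (hx : ‖x‖ = 1) (a b : ℕ) :
    conjMonomial (a + 1) (b + 1) x = conjMonomial a b x := by
  have h : x * starRingEnd ℂ x = 1 := by rw [Complex.mul_conj']; simp [hx]
  calc _ = conjMonomial a b x * (x * starRingEnd ℂ x) := by simp only [conjMonomial]; ring
    _ = _ := by rw [h, mul_one]

lemma conjMonomial_add_of_norm_eq_one {x : ℂ} (hx : ‖x‖ = 1) (a b k : ℕ) :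
    conjMonomial (a + k) (b + k) x = conjMonomial a b x := by
  induction k with
  | zero => rfl
  | succ k ih => rw [← add_assoc, ← add_assoc, conjMonomial_succ_succ_of_norm_eq_one hx, ih]

lemma complex_lap_conjMonomial (a b : ℕ) (z : ℂ) :
    fderiv ℝ (fun y => fderiv ℝ (conjMonomial a b) y 1) z 1
      + fderiv ℝ (fun y => fderiv ℝ (conjMonomial a b) y Complex.I) z Complex.I
    = 4 * a * b * conjMonomial (a - 1) (b - 1) z := by
  have e : ∀ h : ℂ, (fun y => fderiv ℝ (conjMonomial a b) y h) =
      fun y => (a * h) * conjMonomial (a - 1) b y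
        - (-(b * starRingEnd ℂ h)) * conjMonomial a (b - 1) y := by
    intro h; ext y; rw [fderiv_conjMonomial]; ring
  rw [e 1, e Complex.I, fderiv_sub_conjMonomial, fderiv_sub_conjMonomial]
  simp only [fderiv_conjMonomial, Complex.conj_I, map_one]
  linear_combination (a * (a - 1 : ℕ) * conjMonomial (a - 1 - 1) b z
    + b * (b - 1 : ℕ) * conjMonomial a (b - 1 - 1) z
    - 2 * a * b * conjMonomial (a - 1) (b - 1) z) * Complex.I_sq

lemma complex_lap_sub_conjMonomial (α β : ℂ) (a b c d : ℕ) (z : ℂ) :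
    fderiv ℝ (fun y => fderiv ℝ (fun z => α * conjMonomial a b z - β * conjMonomial c d z) y 1) z 1
      + fderiv ℝ (fun y => fderiv ℝ (fun z => α * conjMonomial a b z - β * conjMonomial c d z) y
          Complex.I) z Complex.I
    = α * (4 * a * b * conjMonomial (a - 1) (b - 1) z)
      - β * (4 * c * d * conjMonomial (c - 1) (d - 1) z) := by
  have hd : ∀ (a b : ℕ) (h : ℂ), DifferentiableAt ℝ (fun x => fderiv ℝ (conjMonomial a b) x h) z :=
    fun a b h => (((contDiff_conjMonomial a b).fderiv_right (m := 1) (by norm_num)).clm_apply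
      contDiff_const).differentiable (by simp) z
  have e : ∀ h : ℂ, fderiv ℝ (fun y => fderiv ℝ
        (fun z => α * conjMonomial a b z - β * conjMonomial c d z) y h) z h
      = α * fderiv ℝ (fun y => fderiv ℝ (conjMonomial a b) y h) z h
        - β * fderiv ℝ (fun y => fderiv ℝ (conjMonomial c d) y h) z h := by
    intro h
    simp only [fderiv_sub_conjMonomial]
    rw [fderiv_fun_sub ((hd a b h).const_mul α) ((hd c d h).const_mul β),
      fderiv_const_mul (hd a b h), fderiv_const_mul (hd c d h)]
    simp
  rw [e, e, ← complex_lap_conjMonomial, ← complex_lap_conjMonomial]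
  ring

/-- The polynomial moments of a mean-zero weak Neumann solution vanish. -/
lemma integral_mul_conjMonomial_eq_zero {v : ℂ → ℝ} {V : ℂ → ℂ}
    (hv : IntegrableOn v (ball 0 1)) (hV : IntegrableOn V (ball 0 1))
    (hgrad : IsWeakGradient v V) (hsol : IsWeakNeumann V)
    (hmean : ∫ x in ball (0:ℂ) 1, v x = 0) (p q : ℕ) :
    ∫ x in ball (0:ℂ) 1, (v x : ℂ) * conjMonomial p q x = 0 := by
  have key : ∀ (α β : ℂ) (a b c d : ℕ), (∀ x, ‖x‖ = 1 →
      fderiv ℝ (fun z => α * conjMonomial a b z - β * conjMonomial c d z) x x = 0) →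
      ∫ x in ball (0:ℂ) 1, (v x : ℂ) * (α * (4 * a * b * conjMonomial (a - 1) (b - 1) x)
        - β * (4 * c * d * conjMonomial (c - 1) (d - 1) x)) = 0 := by
    intro α β a b c d hbd
    refine integral_ofReal_mul_complex_lap_eq_zero hv hV hgrad hsol
      ((contDiff_const.mul (contDiff_conjMonomial a b)).sub
        (contDiff_const.mul (contDiff_conjMonomial c d))) hbd ?_
      (fun x => (complex_lap_sub_conjMonomial α β a b c d x).symm)
    have h1 := continuous_conjMonomial (a - 1) (b - 1)
    have h2 := continuous_conjMonomial (c - 1) (d - 1)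
    fun_prop
  have hrad : ∀ (a b : ℕ) (x : ℂ), fderiv ℝ (conjMonomial a b) x x
      = (a + b) * conjMonomial a b x := by
    intro a b x
    rw [fderiv_conjMonomial]
    rcases a with _ | a <;> rcases b with _ | b <;> simp [conjMonomial] <;> ring
  have hlt : ∀ k q : ℕ, ∫ x in ball (0:ℂ) 1, (v x : ℂ) * conjMonomial (k + 1 + q) q x = 0 := by
    intro k q
    have := key (k + 1) (k + 1 + 2 * (q + 1)) (k + 1 + (q + 1)) (0 + (q + 1)) (k + 1) 0 (by
      intro x hx
      rw [fderiv_sub_conjMonomial, hrad, hrad, conjMonomial_add_of_norm_eq_one hx]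
      push_cast
      ring)
    simp only [Nat.cast_zero, mul_zero, zero_mul, sub_zero, zero_add, ← add_assoc,
      Nat.add_sub_cancel] at this
    have h0 : (4 * ((k:ℂ) + 1) * (k + 1 + q + 1) * (q + 1)) ≠ 0 := by
      norm_cast
    refine (mul_eq_zero.1 ?_).resolve_left h0
    rw [← integral_const_mul]
    refine (integral_congr_ae (Filter.Eventually.of_forall fun x => ?_)).trans this
    push_cast
    ring
  rcases lt_trichotomy p q with h | rfl | h
  · obtain ⟨k, rfl⟩ := Nat.exists_eq_add_of_lt h
    have h1 := congrArg (starRingEnd ℂ) (hlt k p)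
    rw [← integral_conj, map_zero] at h1
    refine (integral_congr_ae (Filter.Eventually.of_forall fun x => ?_)).trans h1
    simp only [conjMonomial, map_mul, map_pow, Complex.conj_ofReal, Complex.conj_conj]
    ring
  · have hmean' : ∫ x in ball (0:ℂ) 1, (v x : ℂ) = 0 := by
      rw [integral_complex_ofReal, hmean, Complex.ofReal_zero]
    have := key 1 (p + 1) (p + 1) (p + 1) 1 1 (by
      intro x hx
      rw [fderiv_sub_conjMonomial, hrad, hrad, add_comm p 1, conjMonomial_add_of_norm_eq_one hx]
      push_cast
      ring)
    simp only [Nat.add_sub_cancel, Nat.sub_self] at this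
    have h0 : (4 * ((p:ℂ) + 1) * (p + 1)) ≠ 0 := by norm_cast
    refine (mul_eq_zero.1 ?_).resolve_left h0
    rw [← integral_const_mul]
    calc _ = ∫ x in ball (0:ℂ) 1, ((v x : ℂ) * (1 * (4 * (p + 1 : ℕ) * (p + 1 : ℕ)
            * conjMonomial p p x) - (p + 1) * (4 * (1 : ℕ) * (1 : ℕ) * conjMonomial 0 0 x))
          + 4 * (p + 1) * (v x : ℂ)) := by
          congr 1 with x
          simp [conjMonomial]
          ring
      _ = 0 := by
          rw [integral_add, this, integral_const_mul, hmean', mul_zero, add_zero]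
          · refine integrableOn_ball_ofReal_mul hv ?_
            have h1 := continuous_conjMonomial p p
            have h2 := continuous_conjMonomial 0 0
            fun_prop
          · exact (Integrable.ofReal hv).const_mul _
  · obtain ⟨k, rfl⟩ := Nat.exists_eq_add_of_lt h
    have := hlt k q
    rwa [show k + 1 + q = q + k + 1 by ring] at this

/-- An integrable function on the unit disc all of whose polynomial moments vanish is zero. -/
lemma ae_eq_zero_of_integral_conjMonomial_eq_zero {w : ℂ → ℝ} (hw : IntegrableOn w (ball 0 1))
    (hmom : ∀ p q : ℕ, ∫ x in ball (0:ℂ) 1, (w x : ℂ) * conjMonomial p q x = 0) :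
    ∀ᵐ x ∂volume.restrict (ball (0:ℂ) 1), w x = 0 := by
  set s : Set ℂ := closedBall 0 1 with hs
  have : CompactSpace s := isCompact_iff_compactSpace.1 (isCompact_closedBall _ _)
  have hae : (ball (0:ℂ) 1) =ᵐ[volume] s :=
    ae_eq_of_subset_of_measure_ge ball_subset_closedBall
      (Measure.addHaar_closedBall_eq_addHaar_ball volume 0 1).le
      measurableSet_ball.nullMeasurableSet measure_closedBall_lt_top.ne
  let μ : Measure s := volume.comap Subtype.val
  have hμ : ∀ g : ℂ → ℂ, ∫ x : s, g x ∂μ = ∫ x in ball (0:ℂ) 1, g x := fun g => by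
    rw [setIntegral_congr_set hae]
    exact integral_subtype_comap isClosed_closedBall.measurableSet g
  have hwμ : Integrable (fun x : s => (w x : ℂ)) μ := by
    have h1 : IntegrableOn (fun x => (w x : ℂ)) s :=
      IntegrableOn.congr_set_ae (Integrable.ofReal hw) hae.symm
    exact (integrableOn_iff_comap_subtypeVal isClosed_closedBall.measurableSet).1 h1
  have hint : ∀ f : C(s, ℂ), Integrable (fun x : s => (w x : ℂ) * f x) μ := fun f =>
    hwμ.mul_bdd (c := ‖f‖) f.continuous.aestronglyMeasurable
      (Filter.Eventually.of_forall f.norm_coe_le_norm)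
  have hpoly : ∀ f ∈ (polynomialFunctions s).starClosure, ∫ x : s, (w x : ℂ) * f x ∂μ = 0 := by
    intro f hf
    rw [polynomialFunctions.starClosure_eq_adjoin_X] at hf
    have hf' : f ∈ Subalgebra.toSubmodule (Algebra.adjoin ℂ
      ({Polynomial.toContinuousMapOnAlgHom s Polynomial.X} ∪
        star {Polynomial.toContinuousMapOnAlgHom s Polynomial.X})) := hf
    clear hf
    rw [Algebra.adjoin_eq_span, Set.star_singleton, Set.singleton_union] at hf'
    induction hf' using Submodule.span_induction with
    | mem f hf =>
      obtain ⟨p, q, rfl⟩ := (Submonoid.mem_closure_pair _ _ _).1 hf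
      have := hmom p q
      rw [← hμ] at this
      simpa [conjMonomial] using this
    | zero => simp
    | add f g _ _ hf hg =>
      simp only [ContinuousMap.add_apply, mul_add]
      rw [integral_add (hint f) (hint g), hf, hg, add_zero]
    | smul c f _ hf =>
      simp only [ContinuousMap.smul_apply, smul_eq_mul, mul_left_comm _ c]
      rw [integral_const_mul, hf, mul_zero]
  have hall : ∀ f : C(s, ℂ), ∫ x : s, (w x : ℂ) * f x ∂μ = 0 := by
    intro f
    have hf : f ∈ closure ((polynomialFunctions s).starClosure : Set C(s, ℂ)) := by
      rw [← StarSubalgebra.topologicalClosure_coe,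
        polynomialFunctions.starClosure_topologicalClosure s]
      trivial
    set A := ∫ x : s, ‖(w x : ℂ)‖ ∂μ with hA
    have hbound : ∀ f : C(s, ℂ), ‖∫ x : s, (w x : ℂ) * f x ∂μ‖ ≤ A * ‖f‖ := fun f => by
      rw [hA, ← integral_mul_const]
      refine norm_integral_le_of_norm_le (hwμ.norm.mul_const _)
        (Filter.Eventually.of_forall fun x => ?_)
      rw [norm_mul]
      gcongr
      exact f.norm_coe_le_norm x
    let T : C(s, ℂ) →ₗ[ℂ] ℂ :=
      { toFun := fun f => ∫ x : s, (w x : ℂ) * f x ∂μ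
        map_add' := fun f g => by
          simp only [ContinuousMap.add_apply, mul_add]
          exact integral_add (hint f) (hint g)
        map_smul' := fun c f => by
          simp only [ContinuousMap.smul_apply, smul_eq_mul, mul_left_comm _ c, RingHom.id_apply]
          exact integral_const_mul _ _ }
    have hT : Continuous T := AddMonoidHomClass.continuous_of_bound T A hbound
    exact closure_minimal (t := {f | T f = 0}) hpoly (isClosed_eq hT continuous_const) hf
  have hball := isOpen_ball.ae_eq_zero_of_integral_contDiff_smul_eq_zero (μ := volume)
    hw.locallyIntegrableOn (fun g hg _ hgs => by
      have h1 := hall ⟨fun x => (g x : ℂ), by have := hg.continuous; fun_prop⟩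
      have h2 := hμ (fun x => (w x : ℂ) * (g x : ℂ))
      have h2 := h2.symm.trans h1
      rw [← setIntegral_eq_integral_of_forall_compl_eq_zero (s := ball (0:ℂ) 1)]
      · have h3 : ((∫ x in ball (0:ℂ) 1, g x • w x : ℝ) : ℂ) = 0 := by
          rw [← integral_complex_ofReal]
          refine (integral_congr_ae (Filter.Eventually.of_forall fun x => ?_)).trans h2
          simp [mul_comm]
        exact_mod_cast h3
      · intro x hx
        rw [image_eq_zero_of_notMem_tsupport fun h => hx (hgs h), zero_smul])
  rwa [ae_restrict_iff' measurableSet_ball]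

lemma integral_fderiv_apply_eq_zero {φ : ℂ → ℝ} (hφ : ContDiff ℝ 1 φ) (hc : HasCompactSupport φ)
    (h : ℂ) : ∫ x, fderiv ℝ φ x h = 0 := by
  have h1 : Integrable (fun x => fderiv ℝ φ x h) :=
    ((hφ.continuous_fderiv (by simp)).clm_apply continuous_const).integrable_of_hasCompactSupport
      (hc.fderiv_apply ℝ h)
  have h2 : Integrable φ := hφ.continuous.integrable_of_hasCompactSupport hc
  have := integral_mul_fderiv_eq_neg_fderiv_mul_of_integrable (μ := volume) (f := fun _ : ℂ => (1:ℝ))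
    (g := φ) (v := h) (by simp) (by simpa using h1) (by simpa using h2)
    (fun x _ => differentiableAt_const _) (fun x _ => hφ.differentiable (by simp) x)
  simpa using this

lemma IsWeakGradient.sub_const {v : ℂ → ℝ} {V : ℂ → ℂ} (hv : IntegrableOn v (ball 0 1))
    (hgrad : IsWeakGradient v V) (c : ℝ) : IsWeakGradient (fun x => v x - c) V := by
  intro φ hφ hc hs
  have key : ∀ h : ℂ, (∫ x in ball (0:ℂ) 1, (v x - c) * fderiv ℝ φ x h)
      = ∫ x in ball (0:ℂ) 1, v x * fderiv ℝ φ x h := by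
    intro h
    have hcont : Continuous (fun x => fderiv ℝ φ x h) :=
      (hφ.continuous_fderiv (by simp)).clm_apply continuous_const
    have h0 : ∫ x in ball (0:ℂ) 1, fderiv ℝ φ x h = 0 := by
      rw [setIntegral_eq_integral_of_forall_compl_eq_zero]
      · exact integral_fderiv_apply_eq_zero hφ hc h
      · intro x hx
        have : fderiv ℝ φ x = 0 := image_eq_zero_of_notMem_tsupport
          fun h' => hx (hs (tsupport_fderiv_subset ℝ h'))
        rw [this]; rfl
    simp only [sub_mul]
    rw [integral_sub (integrableOn_ball_mul hv hcont)
      (integrableOn_ball_mul (integrableOn_const measure_ball_lt_top.ne) hcont),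
      integral_const_mul, h0, mul_zero, sub_zero]
  rw [key, key]
  exact hgrad φ hφ hc hs

/-- Weak Neumann solutions with zero right-hand side are constant. -/
theorem exists_ae_eq_const {v : ℂ → ℝ} {V : ℂ → ℂ}
    (hv : IntegrableOn v (ball 0 1)) (hV : IntegrableOn V (ball 0 1))
    (hgrad : IsWeakGradient v V) (hsol : IsWeakNeumann V) :
    ∃ c : ℝ, ∀ᵐ x ∂volume.restrict (ball (0:ℂ) 1), v x = c := by
  set c : ℝ := ⨍ x in ball (0:ℂ) 1, v x with hc
  have hci : IntegrableOn (fun _ : ℂ => c) (ball 0 1) := integrableOn_const measure_ball_lt_top.ne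
  have hw : IntegrableOn (fun x => v x - c) (ball 0 1) := hv.sub hci
  have : IsFiniteMeasure (volume.restrict (ball (0:ℂ) 1)) := ⟨by simp⟩
  have hmean : ∫ x in ball (0:ℂ) 1, (v x - c) = 0 := integral_sub_average _ _
  refine ⟨c, ?_⟩
  filter_upwards [ae_eq_zero_of_integral_conjMonomial_eq_zero hw
    (integral_mul_conjMonomial_eq_zero hw hV (hgrad.sub_const hv c) hsol hmean)] with x hx
  linarith

lemma symReflect_ae_eq_const {v : ℂ → ℝ} {c : ℝ}
    (hc : ∀ᵐ x ∂volume.restrict (ball (0:ℂ) 1), v x = c) :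
    ∀ᵐ x : ℂ, symReflect v x = c := by
  rw [ae_restrict_iff' measurableSet_ball, ae_iff] at hc
  set N := {x : ℂ | ¬(x ∈ ball (0:ℂ) 1 → v x = c)} with hN
  have himg : volume ((fun x : ℂ => (starRingEnd ℂ x)⁻¹) '' (N \ {0})) = 0 := by
    refine addHaar_image_eq_zero_of_differentiableOn_of_addHaar_eq_zero _ ?_
      (measure_mono_null Set.sdiff_subset hc)
    intro x hx
    have h1 : DifferentiableAt ℝ (fun z : ℂ => starRingEnd ℂ z) x :=
      Complex.conjCLE.differentiableAt
    exact (h1.inv (by simpa using hx.2)).differentiableWithinAt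
  have hsph : volume (sphere (0:ℂ) 1) = 0 := Measure.addHaar_sphere _ _ _
  rw [ae_iff]
  refine measure_mono_null ?_ (measure_union_null (measure_union_null hc himg) hsph)
  intro x hx
  by_contra hx'
  simp only [Set.mem_union, not_or] at hx'
  obtain ⟨⟨h1, h2⟩, h3⟩ := hx'
  apply hx
  by_cases hb : x ∈ ball (0:ℂ) 1
  · rw [symReflect, if_pos hb]
    by_contra h
    exact h1 fun h' => h (h' hb)
  · rw [symReflect, if_neg hb]
    by_contra h
    have hx1 : 1 < ‖x‖ := by
      rw [mem_ball_zero_iff, not_lt] at hb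
      exact lt_of_le_of_ne hb fun h => h3 (by simp [← h])
    have hx0 : x ≠ 0 := norm_pos_iff.1 (zero_lt_one.trans hx1)
    refine h2 ⟨(starRingEnd ℂ x)⁻¹, ⟨fun h' => h (h' ?_), by simpa using hx0⟩, by simp⟩
    simpa using inv_lt_one_of_one_lt₀ hx1

lemma integral_lap_eq_zero {ψ : ℂ → ℝ} (hψ : ContDiff ℝ 2 ψ) (hc : HasCompactSupport ψ) :
    ∫ x, lap ψ x = 0 := by
  have hd : ∀ h : ℂ, ContDiff ℝ 1 (fun x => fderiv ℝ ψ x h) := fun h =>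
    (hψ.fderiv_right (m := 1) (by norm_num)).clm_apply contDiff_const
  have hdc : ∀ h : ℂ, HasCompactSupport (fun x => fderiv ℝ ψ x h) := fun h => hc.fderiv_apply ℝ h
  have hi : ∀ h : ℂ, Integrable (fun x => fderiv ℝ (fun y => fderiv ℝ ψ y h) x h) := fun h =>
    (((hd h).continuous_fderiv (by simp)).clm_apply
      continuous_const).integrable_of_hasCompactSupport ((hdc h).fderiv_apply ℝ h)
  unfold lap
  rw [integral_add (hi _) (hi _), integral_fderiv_apply_eq_zero (hd _) (hdc _),
    integral_fderiv_apply_eq_zero (hd _) (hdc _), add_zero]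

/-- Let `v ∈ W^{1,1}(D)` (with weak gradient `V`) satisfy
`∫_D ∇v·∇ψ = 0` for all `ψ ∈ C¹(D̄)` (distributional Neumann problem with `f = 0`).
Then the symmetric reflection `v̂` is (weakly) harmonic on `ℝ²` and `v` is constant. -/
theorem stmt_10 (v : ℂ → ℝ) (V : ℂ → ℂ)
    (hv : IntegrableOn v (ball 0 1)) (hV : IntegrableOn V (ball 0 1))
    -- V is the weak gradient of v on D
    (hgrad : ∀ φ : ℂ → ℝ, ContDiff ℝ 1 φ → HasCompactSupport φ → tsupport φ ⊆ ball 0 1 →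
      (∫ x in ball (0:ℂ) 1, v x * fderiv ℝ φ x 1)
        = - ∫ x in ball (0:ℂ) 1, (V x).re * φ x
      ∧ (∫ x in ball (0:ℂ) 1, v x * fderiv ℝ φ x Complex.I)
        = - ∫ x in ball (0:ℂ) 1, (V x).im * φ x)
    -- weak Neumann solution with f = 0: test functions C¹ up to the boundary
    (hsol : ∀ ψ : ℂ → ℝ, ContDiff ℝ 1 ψ →
      (∫ x in ball (0:ℂ) 1,
        ((V x).re * fderiv ℝ ψ x 1 + (V x).im * fderiv ℝ ψ x Complex.I)) = 0) :
    (∀ ψ : ℂ → ℝ, ContDiff ℝ 2 ψ → HasCompactSupport ψ →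
      (∫ x, symReflect v x * lap ψ x) = 0)
    ∧ ∃ c : ℝ, ∀ᵐ x ∂volume.restrict (ball (0:ℂ) 1), v x = c := by
  obtain ⟨c, hc⟩ := exists_ae_eq_const hv hV hgrad hsol
  refine ⟨fun ψ hψ hψc => ?_, c, hc⟩
  calc ∫ x, symReflect v x * lap ψ x = ∫ x, c * lap ψ x := by
        refine integral_congr_ae ?_
        filter_upwards [symReflect_ae_eq_const hc] with x hx
        rw [hx]
    _ = 0 := by rw [integral_const_mul, integral_lap_eq_zero hψ hψc, mul_zero]
end
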